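/- arXiv:1911.01250 — 2 statements merged into one kernel-verified Lean document; each statement's English description precedes it below -/
import Mathlib

section
/- For each ℓ ∈ {1,…,k′−1}: p₀ is strictly positive on the open interval I_ℓ = (x_{2ℓ}, x_{2ℓ−1}), and the function g : I_ℓ → ℝ defined by g(z) = z·R(z) / ((z−1)·√(p₀(z))) (real square root) is surjective onto ℝ. -/
open Polynomial Matrix

/-- The matrix `A_m(z)` with rows `(z + α β⁻¹, α + β)` and `(z(α⁻¹+β⁻¹), z + β α⁻¹)`. -/
noncomputable def aztecA (a b : ℝ) (z : ℂ) : Matrix (Fin 2) (Fin 2) ℂ :=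
  !![z + (a : ℂ) * ((b : ℂ))⁻¹, (a : ℂ) + (b : ℂ);
     z * (((a : ℂ))⁻¹ + ((b : ℂ))⁻¹), z + (b : ℂ) * ((a : ℂ))⁻¹]

/-- `T(z) = A_1(z) A_2(z) ⋯ A_k(z)`. -/
noncomputable def aztecT {k : ℕ} (α β : Fin k → ℝ) (z : ℂ) : Matrix (Fin 2) (Fin 2) ℂ :=
  (List.ofFn fun m => aztecA (α m) (β m) z).prod
/-- The function `g(z) = z R(z) / ((z−1) √(p₀(z)))`, which up to sign is `z ρ₁′(z)/ρ₁(z)`. -/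
noncomputable def aztecg (R p₀ : Polynomial ℝ) (z : ℝ) : ℝ :=
  z * R.eval z / ((z - 1) * Real.sqrt (p₀.eval z))

/-!
Write `τ = Tr T`. Since `det T = (X - 1)^(2k)`, the polynomial `τ² - 4 (X - 1)^(2k) = q² p₀` is the
discriminant of the characteristic polynomial of `T`. Differentiating this equality shows that
`2 τ R = (X - 1) q p₀'` at the zeros of `p₀`. On `[x_{2ℓ}, x_{2ℓ-1}]` we have `p₀ ≥ 0`, hence
`τ² > 0`, and `p₀'` has opposite signs at the two ends; so `R` changes sign, provided that `q` does
not vanish there, and `z R(z) / (z - 1) - y √(p₀(z))` has a zero for every `y`.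

That `q(z) ≠ 0` where `p₀(z) ≥ 0` comes from monotonicity: when `k ≥ 2`, for real `z ≠ 1` and every
`u ≠ 0` the vector `T(z) u` turns counterclockwise as `z` grows. At a zero of `q` the discriminant
vanishes to second order, which under such a rotation forces `T(z)` to be scalar and the second
derivative `2 q'(z)² p₀(z)` of the discriminant to be negative.

For `z > 0` the entries of `T(z)` are positive and so is the discriminant. Hence the zeros of `p₀`
are nonpositive, so `x_{2ℓ-1} < x₀ ≤ 0` and `z / (z - 1)` has constant sign on the interval.
-/

theorem eq_of_forall_aeval_eq {R S : Type*} [CommRing R] [CommRing S] [IsDomain S] [Infinite S]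
    [Algebra R S] [FaithfulSMul R S] {f g : R[X]} (h : ∀ z : S, aeval z f = aeval z g) : f = g :=
  map_injective _ (FaithfulSMul.algebraMap_injective R S) <| Polynomial.funext fun z => by
    simpa only [eval_map_algebraMap] using h z

/-! ### Sign changes on an interval -/

theorem mul_pos_of_isPreconnected_of_ne_zero {E : Type*} [TopologicalSpace E] {s : Set E}
    (hs : IsPreconnected s) {f : E → ℝ} (hf : ContinuousOn f s) (hne : ∀ z ∈ s, f z ≠ 0)
    {a b : E} (ha : a ∈ s) (hb : b ∈ s) : 0 < f a * f b := by
  by_contra! h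
  obtain ⟨z, hz, hfz⟩ : (0 : ℝ) ∈ f '' s := by
    rcases mul_nonpos_iff.1 h with ⟨h₁, h₂⟩ | ⟨h₁, h₂⟩
    · exact hs.intermediate_value hb ha hf ⟨h₂, h₁⟩
    · exact hs.intermediate_value ha hb hf ⟨h₁, h₂⟩
  exact hne z hz hfz

theorem exists_div_sqrt_eq {h f : ℝ → ℝ} {a b : ℝ} (hab : a ≤ b)
    (hh : ContinuousOn h (Set.Icc a b)) (hf : ContinuousOn f (Set.Icc a b))
    (hfa : f a = 0) (hfb : f b = 0) (hpos : ∀ z ∈ Set.Ioo a b, 0 < f z)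
    (hsign : h a * h b < 0) (y : ℝ) : ∃ z ∈ Set.Ioo a b, h z / √(f z) = y := by
  -- At the endpoints `h - y √f` takes the values of `h`, so it has a zero in between.
  obtain ⟨z, hz, hzero⟩ : ∃ z ∈ Set.Icc a b, h z - y * √(f z) = 0 := by
    by_contra! hne
    have hcont : ContinuousOn (fun z => h z - y * √(f z)) (Set.Icc a b) :=
      hh.sub (continuousOn_const.mul hf.sqrt)
    have := mul_pos_of_isPreconnected_of_ne_zero isPreconnected_Icc hcont hne
      (Set.left_mem_Icc.2 hab) (Set.right_mem_Icc.2 hab)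
    simp only [hfa, hfb, Real.sqrt_zero, mul_zero, sub_zero] at this
    exact hsign.not_gt this
  have hza : z ≠ a := by
    rintro rfl
    exact left_ne_zero_of_mul hsign.ne (by simpa [hfa] using hzero)
  have hzb : z ≠ b := by
    rintro rfl
    exact right_ne_zero_of_mul hsign.ne (by simpa [hfb] using hzero)
  have hz' : z ∈ Set.Ioo a b := ⟨hz.1.lt_of_ne' hza, hz.2.lt_of_ne hzb⟩
  exact ⟨z, hz', (div_eq_iff (Real.sqrt_pos.2 (hpos z hz')).ne').2 (sub_eq_zero.1 hzero)⟩

theorem eval_derivative_mul_sub_nonneg_of_convex {f : ℝ[X]} {s : Set ℝ} (hs : Convex ℝ s)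
    (hf : ∀ z ∈ s, 0 ≤ f.eval z) {e z : ℝ} (he : e ∈ s) (hz : z ∈ s) (hroot : f.eval e = 0) :
    0 ≤ (derivative f).eval e * (z - e) := by
  have hmin : IsLocalMinOn (fun t => f.eval t) s e :=
    IsMinOn.localize fun t ht => hroot.trans_le (hf t ht)
  have := hmin.hasFDerivWithinAt_nonneg (f.hasDerivAt e).hasFDerivAt.hasFDerivWithinAt
    (sub_mem_posTangentConeAt_of_segment_subset (hs.segment_subset he hz))
  simpa [mul_comm] using this

theorem eval_derivative_mul_eval_derivative_neg {f : ℝ[X]} (hf : Squarefree f) {a b : ℝ}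
    (hab : a < b) (ha : f.eval a = 0) (hb : f.eval b = 0)
    (hnonneg : ∀ z ∈ Set.Icc a b, 0 ≤ f.eval z) :
    (derivative f).eval a * (derivative f).eval b < 0 := by
  have hsimple : ∀ e, f.eval e = 0 → (derivative f).eval e ≠ 0 := fun e he =>
    (PerfectField.separable_iff_squarefree.2 hf).eval₂_derivative_ne_zero (RingHom.id ℝ) he
  have ha_mem := Set.left_mem_Icc.2 hab.le
  have hb_mem := Set.right_mem_Icc.2 hab.le
  have hda : 0 ≤ (derivative f).eval a := nonneg_of_mul_nonneg_left
    (eval_derivative_mul_sub_nonneg_of_convex (convex_Icc a b) hnonneg ha_mem hb_mem ha)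
    (sub_pos.2 hab)
  have hdb : (derivative f).eval b ≤ 0 := nonpos_of_mul_nonneg_left
    (eval_derivative_mul_sub_nonneg_of_convex (convex_Icc a b) hnonneg hb_mem ha_mem hb)
    (sub_neg.2 hab)
  exact mul_neg_of_pos_of_neg (hda.lt_of_ne' (hsimple a ha)) (hdb.lt_of_ne (hsimple b hb))

theorem eq_C_leadingCoeff_mul_nodal {K : Type*} [Field K] {n : ℕ} {f : K[X]} {x : Fin n → K}
    (hf : f ≠ 0) (hdeg : f.natDegree = n) (hx : Function.Injective x)
    (hroot : ∀ i, f.eval (x i) = 0) :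
    f = C f.leadingCoeff * Lagrange.nodal Finset.univ x := by
  have hlead := leadingCoeff_ne_zero.2 hf
  refine eq_of_degree_le_of_eval_index_eq (s := Finset.univ) hx.injOn ?_ ?_ ?_ ?_
  · simp [degree_eq_natDegree hf, hdeg]
  · simp [degree_eq_natDegree hf, hdeg, degree_C_mul hlead, Lagrange.degree_nodal]
  · simp [Lagrange.nodal_monic.leadingCoeff]
  · simp [hroot, Lagrange.eval_nodal_at_node]

theorem eval_pos_of_mem_Ioo_of_even {n : ℕ} {f : ℝ[X]} {x : Fin n → ℝ}
    (hlead : 0 < f.leadingCoeff) (hdeg : f.natDegree = n) (hx : StrictAnti x)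
    (hroot : ∀ i, f.eval (x i) = 0) {i j : Fin n} (hi : Even (i : ℕ)) (hij : (i : ℕ) = j + 1)
    {z : ℝ} (hz : z ∈ Set.Ioo (x i) (x j)) : 0 < f.eval z := by
  have hsign : ∀ m, z - x m ≤ 0 ↔ (m : ℕ) < i := fun m => by
    constructor
    · intro h
      exact hx.lt_iff_gt.1 (hz.1.trans_le (sub_nonpos.1 h))
    · intro h
      exact sub_nonpos.2 (hz.2.le.trans (hx.antitone (Fin.le_def.2 (by omega))))
  have hne : ∀ m, z - x m ≠ 0 := fun m h => by
    rcases lt_or_ge (m : ℕ) i with hm | hm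
    · linarith [hz.2, hx.antitone (show m ≤ j from Fin.le_def.2 (by omega))]
    · exact hm.not_gt ((hsign m).1 h.le)
  have hprod : 0 ≤ ∏ m, (z - x m) := by
    refine Finset.prod_nonneg_of_card_nonpos_even ?_
    simpa only [hsign, Fin.card_filter_val_lt, min_eq_right i.isLt.le] using hi
  rw [eq_C_leadingCoeff_mul_nodal (leadingCoeff_ne_zero.1 hlead.ne') hdeg hx.injective hroot,
    eval_mul, eval_C, Lagrange.eval_nodal]
  exact mul_pos hlead (hprod.lt_of_ne' (Finset.prod_ne_zero_iff.2 fun m _ => hne m))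

/-! ### Turning of polynomial families of planar linear maps -/

section AngularForm

variable {A : Type*} [CommRing A]

/-- For a polynomial family `P` of `2 × 2` matrices, `det (P(z) u, P'(z) u)` as a function of `u`.
Over `ℝ` it is positive exactly when the direction of `P(z) u` turns counterclockwise as `z` grows,
and it measures the angular speed up to the factor `‖P(z) u‖²`. -/
noncomputable def angularForm (P : Matrix (Fin 2) (Fin 2) A[X]) (z : A) (u : Fin 2 → A) : A :=
  det (of ![P.map (eval z) *ᵥ u, (P.map derivative).map (eval z) *ᵥ u])

theorem angularForm_eq (P : Matrix (Fin 2) (Fin 2) A[X]) (z : A) (u : Fin 2 → A) :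
    angularForm P z u =
      ((P 0 0).eval z * u 0 + (P 0 1).eval z * u 1) *
          ((derivative (P 1 0)).eval z * u 0 + (derivative (P 1 1)).eval z * u 1) -
        ((derivative (P 0 0)).eval z * u 0 + (derivative (P 0 1)).eval z * u 1) *
          ((P 1 0).eval z * u 0 + (P 1 1).eval z * u 1) := by
  simp only [angularForm, mulVec, dotProduct, Fin.sum_univ_two, map_apply,
    det_fin_two, of_apply, cons_val_zero, cons_val_one]
  ring

theorem angularForm_mul (P Q : Matrix (Fin 2) (Fin 2) A[X]) (z : A) (u : Fin 2 → A) :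
    angularForm (P * Q) z u =
      angularForm P z (Q.map (eval z) *ᵥ u) + P.det.eval z * angularForm Q z u := by
  simp only [angularForm_eq, mul_apply, mulVec, dotProduct, Fin.sum_univ_two, map_apply,
    det_fin_two, derivative_add, derivative_mul, eval_add, eval_sub, eval_mul]
  ring

theorem discr_fin_two_eq (M : Matrix (Fin 2) (Fin 2) A) :
    M.discr = (M 0 0 - M 1 1) ^ 2 + 4 * (M 0 1 * M 1 0) := by
  rw [discr_fin_two, trace_fin_two, det_fin_two]
  ring

theorem exists_map_eval_eq_scalar [IsDomain A] [NeZero (2 : A)] {P : Matrix (Fin 2) (Fin 2) A[X]}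
    {z : A} (hform : ∀ u ≠ 0, angularForm P z u ≠ 0) (hdiscr : P.discr.eval z = 0)
    (hderiv : (derivative P.discr).eval z = 0) : ∃ c, P.map (eval z) = scalar (Fin 2) c := by
  have hzero : ∀ u, angularForm P z u = 0 → u = 0 := fun u => not_imp_not.1 (hform u)
  have htwo : (2 : A) ≠ 0 := two_ne_zero
  simp only [angularForm_eq] at hzero
  simp only [discr_fin_two_eq, derivative_add, derivative_sub, derivative_mul, derivative_sq,
    derivative_ofNat, eval_add, eval_sub, eval_mul, eval_pow, eval_ofNat, eval_C,
    eval_zero] at hdiscr hderiv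
  suffices h : (P 0 1).eval z = 0 ∧ (P 1 0).eval z = 0 ∧ (P 1 1).eval z = (P 0 0).eval z by
    refine ⟨(P 0 0).eval z, ?_⟩
    ext i j
    fin_cases i <;> fin_cases j <;> simp [h]
  generalize (P 0 0).eval z = a, (P 0 1).eval z = b, (P 1 0).eval z = c, (P 1 1).eval z = d,
    (derivative (P 0 0)).eval z = a₁, (derivative (P 0 1)).eval z = b₁,
    (derivative (P 1 0)).eval z = c₁, (derivative (P 1 1)).eval z = d₁ at *
  -- If `P(z)` were not scalar, one of these vectors would be an eigenvector of `P(z)`.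
  have hleft : ![2 * b, d - a] = 0 := hzero _ <| mul_left_cancel₀ htwo <| by
    simp only [cons_val_zero, cons_val_one]
    linear_combination b * (a + d) * hderiv - 2 * (d * b₁ + a₁ * b) * hdiscr
  have hright : ![a - d, 2 * c] = 0 := hzero _ <| mul_left_cancel₀ htwo <| by
    simp only [cons_val_zero, cons_val_one]
    linear_combination 2 * (a * c₁ + c * d₁) * hdiscr - c * (a + d) * hderiv
  have hb : 2 * b = 0 := congrFun hleft 0
  have hc : 2 * c = 0 := congrFun hright 1
  exact ⟨(mul_eq_zero.1 hb).resolve_left htwo, (mul_eq_zero.1 hc).resolve_left htwo,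
    sub_eq_zero.1 (congrFun hleft 1)⟩

end AngularForm

section Discriminant

variable {K : Type*} [Field K] [LinearOrder K] [IsStrictOrderedRing K]
  {P : Matrix (Fin 2) (Fin 2) K[X]} {z : K}

theorem eval_derivative_derivative_discr_neg (hform : ∀ u ≠ 0, 0 < angularForm P z u) {c : K}
    (hscalar : P.map (eval z) = scalar (Fin 2) c) :
    (derivative (derivative P.discr)).eval z < 0 := by
  have hentry : ∀ i j, (P i j).eval z = scalar (Fin 2) c i j := fun i j => by
    rw [← hscalar, map_apply]
  have hleading : 0 < c * (derivative (P 1 0)).eval z := by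
    simpa [angularForm_eq, hentry] using hform ![1, 0] (by simp)
  have hpos : ∀ s, 0 < c * (derivative (P 1 0)).eval z * (s * s)
      + c * ((derivative (P 1 1)).eval z - (derivative (P 0 0)).eval z) * s
      + -(c * (derivative (P 0 1)).eval z) := fun s => by
    have := hform ![s, 1] (by simp)
    simp only [angularForm_eq, hentry, scalar_apply, diagonal_apply_eq, ne_eq, zero_ne_one,
      one_ne_zero, not_false_eq_true, diagonal_apply_ne, cons_val_zero, cons_val_one] at this
    linear_combination this
  have hdiscrim := discrim_lt_zero hleading.ne' hpos
  have hscaled : c ^ 2 * (derivative (derivative P.discr)).eval z < 0 := by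
    simp only [discr_fin_two_eq, derivative_add, derivative_mul, derivative_sq, derivative_sub,
      derivative_ofNat, derivative_C, eval_add, eval_mul, eval_sub, eval_C, eval_ofNat, eval_zero,
      hentry, scalar_apply, diagonal_apply_eq, diagonal_apply_ne, ne_eq, zero_ne_one, one_ne_zero,
      not_false_eq_true]
    rw [discrim] at hdiscrim
    linear_combination 2 * hdiscrim
  exact neg_of_mul_neg_right hscaled (sq_nonneg c)

theorem eval_neg_of_discr_eq_sq_mul (hform : ∀ u ≠ 0, 0 < angularForm P z u) {q p₀ : K[X]}
    (hfact : P.discr = q ^ 2 * p₀) (hq : q.eval z = 0) : p₀.eval z < 0 := by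
  have hfirst : (derivative P.discr).eval z = 0 := by simp [hfact, derivative_sq, hq]
  obtain ⟨c, hc⟩ := exists_map_eval_eq_scalar (fun u hu => (hform u hu).ne')
    (by simp [hfact, hq]) hfirst
  have hsecond : (derivative (derivative P.discr)).eval z
      = 2 * (derivative q).eval z ^ 2 * p₀.eval z := by
    simp only [hfact, hq, derivative_sq, derivative_mul, derivative_add, derivative_C, eval_add,
      eval_mul, eval_pow, eval_C, eval_zero]
    ring
  have hneg := eval_derivative_derivative_discr_neg hform hc
  rw [hsecond] at hneg
  exact neg_of_mul_neg_right hneg (mul_nonneg zero_le_two (sq_nonneg _))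

end Discriminant

/-! ### The symbol of the Aztec diamond -/

/-- The matrix `A_m` of `aztecA` with polynomial entries. -/
noncomputable def aztecPolyA (a b : ℝ) : Matrix (Fin 2) (Fin 2) ℝ[X] :=
  !![X + C (a * b⁻¹), C (a + b); X * C (a⁻¹ + b⁻¹), X + C (b * a⁻¹)]

/-- The matrix `T` of `aztecT` with polynomial entries. The parameters are a list of pairs
`(α_m, β_m)`, so that products can be treated by induction. -/
noncomputable def aztecPolyT (l : List (ℝ × ℝ)) : Matrix (Fin 2) (Fin 2) ℝ[X] :=
  (l.map fun c => aztecPolyA c.1 c.2).prod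

theorem aztecPolyT_cons (c : ℝ × ℝ) (l : List (ℝ × ℝ)) :
    aztecPolyT (c :: l) = aztecPolyA c.1 c.2 * aztecPolyT l := by
  simp only [aztecPolyT, List.map_cons, List.prod_cons]

theorem map_aeval_aztecPolyA (a b : ℝ) (z : ℂ) : (aztecPolyA a b).map (aeval z) = aztecA a b z := by
  ext i j
  fin_cases i <;> fin_cases j <;> simp [aztecPolyA, aztecA]

theorem map_aeval_aztecPolyT {k : ℕ} (α β : Fin k → ℝ) (z : ℂ) :
    (aztecPolyT (List.ofFn fun m => (α m, β m))).map (aeval z) = aztecT α β z := by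
  have := map_list_prod (aeval z : ℝ[X] →ₐ[ℝ] ℂ).mapMatrix
    ((List.ofFn fun m => (α m, β m)).map fun c => aztecPolyA c.1 c.2)
  simpa [aztecPolyT, aztecT, List.map_ofFn, Function.comp_def, map_aeval_aztecPolyA] using this

theorem aeval_trace_aztecPolyT {k : ℕ} (α β : Fin k → ℝ) (z : ℂ) :
    aeval z (aztecPolyT (List.ofFn fun m => (α m, β m))).trace = (aztecT α β z).trace := by
  rw [← map_aeval_aztecPolyT]
  exact AddMonoidHom.map_trace (aeval z : ℝ[X] →ₐ[ℝ] ℂ) _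

theorem det_aztecPolyA {a b : ℝ} (ha : a ≠ 0) (hb : b ≠ 0) :
    (aztecPolyA a b).det = (X - 1) ^ 2 := by
  refine Polynomial.funext fun r => ?_
  simp only [aztecPolyA, det_fin_two_of, eval_sub, eval_mul, eval_add, eval_X, eval_C, eval_pow,
    eval_one]
  field_simp
  ring

theorem angularForm_aztecPolyA {a b : ℝ} (ha : a ≠ 0) (hb : b ≠ 0) (z : ℝ) (u : Fin 2 → ℝ) :
    angularForm (aztecPolyA a b) z u = (a + b) * (u 0 / b + u 1) ^ 2 := by
  simp only [angularForm_eq, aztecPolyA, of_apply, cons_val_zero, cons_val_one, cons_val_fin_one,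
    eval_add, eval_X, eval_mul, eval_C, derivative_mul, derivative_X, one_mul, derivative_C,
    mul_zero, add_zero, derivative_add, eval_one, eval_zero, zero_mul]
  field_simp
  ring

theorem aztecPolyA_mulVec_of_div_add_eq_zero {a b : ℝ} (ha : a ≠ 0) (hb : b ≠ 0) (z : ℝ)
    {u : Fin 2 → ℝ} (hu : u 0 / b + u 1 = 0) :
    (aztecPolyA a b).map (eval z) *ᵥ u = (u 0 * (z - 1)) • ![1, a⁻¹] := by
  have hu' : u 1 = -(u 0 / b) := by linarith
  ext i
  fin_cases i <;> simp [aztecPolyA, mulVec, dotProduct, hu'] <;> field_simp <;> ring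

theorem angularForm_aztecPolyA_mul_pos {a b a' b' : ℝ} (ha : 0 < a) (hb : 0 < b) (ha' : 0 < a')
    (hb' : 0 < b') {z : ℝ} (hz : z ≠ 1) {u : Fin 2 → ℝ} (hu : u ≠ 0) :
    0 < angularForm (aztecPolyA a b * aztecPolyA a' b') z u := by
  rw [angularForm_mul, det_aztecPolyA ha.ne' hb.ne', angularForm_aztecPolyA ha.ne' hb.ne',
    angularForm_aztecPolyA ha'.ne' hb'.ne']
  have hz' : z - 1 ≠ 0 := sub_ne_zero.2 hz
  have hdet : 0 < ((X - 1 : ℝ[X]) ^ 2).eval z := by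
    simp only [eval_pow, eval_sub, eval_X, eval_one]
    positivity
  -- The second factor fails to turn `u` only on one line, which it maps to a line that the first
  -- factor does turn.
  by_cases hker : u 0 / b' + u 1 = 0
  · have hu0 : u 0 ≠ 0 := fun h => hu <| by
      ext i
      fin_cases i
      · exact h
      · simpa [h] using hker
    have hsum : u 0 * (z - 1) / b + u 0 * (z - 1) * a'⁻¹ ≠ 0 := by
      rw [div_eq_mul_inv, ← mul_add]
      have : 0 < b⁻¹ + a'⁻¹ := by positivity
      exact mul_ne_zero (mul_ne_zero hu0 hz') this.ne'
    rw [aztecPolyA_mulVec_of_div_add_eq_zero ha'.ne' hb'.ne' z hker, hker]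
    simp only [Pi.smul_apply, cons_val_zero, cons_val_one, smul_eq_mul, mul_one]
    positivity
  · positivity

section Parameters

variable {l : List (ℝ × ℝ)}

theorem det_aztecPolyT (hl : ∀ c ∈ l, c.1 ≠ 0 ∧ c.2 ≠ 0) :
    (aztecPolyT l).det = (X - 1) ^ (2 * l.length) := by
  induction l with
  | nil => simp [aztecPolyT]
  | cons c l ih =>
    obtain ⟨hc, hl⟩ := List.forall_mem_cons.1 hl
    rw [aztecPolyT_cons, det_mul, det_aztecPolyA hc.1 hc.2, ih hl, List.length_cons, ← pow_add]
    ring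

theorem discr_aztecPolyT (hl : ∀ c ∈ l, c.1 ≠ 0 ∧ c.2 ≠ 0) :
    (aztecPolyT l).discr = (aztecPolyT l).trace ^ 2 - 4 * (X - 1) ^ (2 * l.length) := by
  rw [discr_fin_two, det_aztecPolyT hl]

theorem aeval_discr_aztecPolyT {k : ℕ} {α β : Fin k → ℝ} (hα : ∀ m, α m ≠ 0) (hβ : ∀ m, β m ≠ 0)
    (z : ℂ) : aeval z (aztecPolyT (List.ofFn fun m => (α m, β m))).discr =
      (aztecT α β z).trace ^ 2 - 4 * (z - 1) ^ (2 * k) := by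
  rw [discr_aztecPolyT (List.forall_mem_ofFn_iff.2 fun m => ⟨hα m, hβ m⟩), List.length_ofFn,
    ← aeval_trace_aztecPolyT]
  simp only [map_sub, map_mul, map_pow, aeval_X, map_one, map_ofNat]

theorem angularForm_aztecPolyT_nonneg (hl : ∀ c ∈ l, 0 < c.1 ∧ 0 < c.2) (z : ℝ) (u : Fin 2 → ℝ) :
    0 ≤ angularForm (aztecPolyT l) z u := by
  induction l with
  | nil => simp [aztecPolyT, angularForm_eq]
  | cons c l ih =>
    obtain ⟨⟨ha, hb⟩, hl⟩ := List.forall_mem_cons.1 hl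
    rw [aztecPolyT_cons, angularForm_mul, angularForm_aztecPolyA ha.ne' hb.ne',
      det_aztecPolyA ha.ne' hb.ne']
    simp only [eval_pow, eval_sub, eval_X, eval_one]
    have := ih hl
    positivity

theorem angularForm_aztecPolyT_pos (hl : ∀ c ∈ l, 0 < c.1 ∧ 0 < c.2) (hlen : 2 ≤ l.length) {z : ℝ}
    (hz : z ≠ 1) {u : Fin 2 → ℝ} (hu : u ≠ 0) : 0 < angularForm (aztecPolyT l) z u := by
  obtain ⟨c, d, l, rfl⟩ : ∃ c d l', l = c :: d :: l' := by
    match l, hlen with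
    | c :: d :: l, _ => exact ⟨c, d, l, rfl⟩
  simp only [List.forall_mem_cons] at hl
  obtain ⟨⟨ha, hb⟩, ⟨ha', hb'⟩, hl⟩ := hl
  have hz' : z - 1 ≠ 0 := sub_ne_zero.2 hz
  have hdet : ((aztecPolyT l).map (eval z)).det ≠ 0 := by
    have := (evalRingHom z).map_det (aztecPolyT l)
    rw [det_aztecPolyT fun c hc => ⟨(hl c hc).1.ne', (hl c hc).2.ne'⟩, coe_evalRingHom] at this
    refine this.symm.trans_ne ?_
    simpa only [eval_pow, eval_sub, eval_X, eval_one] using pow_ne_zero _ hz'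
  have hne : (aztecPolyT l).map (eval z) *ᵥ u ≠ 0 :=
    fun h => hu (eq_zero_of_mulVec_eq_zero hdet h)
  rw [aztecPolyT_cons, aztecPolyT_cons, ← mul_assoc, angularForm_mul, det_mul,
    det_aztecPolyA ha.ne' hb.ne', det_aztecPolyA ha'.ne' hb'.ne']
  refine add_pos_of_pos_of_nonneg (angularForm_aztecPolyA_mul_pos ha hb ha' hb' hz hne)
    (mul_nonneg ?_ (angularForm_aztecPolyT_nonneg hl z u))
  simp only [eval_mul, eval_pow, eval_sub, eval_X, eval_one]
  positivity

theorem eval_aztecPolyT_pos (hl : ∀ c ∈ l, 0 < c.1 ∧ 0 < c.2) (hne : l ≠ []) {z : ℝ} (hz : 0 < z)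
    (i j : Fin 2) : 0 < (aztecPolyT l i j).eval z := by
  have hA : ∀ c : ℝ × ℝ, 0 < c.1 ∧ 0 < c.2 → ∀ i j, 0 < (aztecPolyA c.1 c.2 i j).eval z := by
    rintro ⟨a, b⟩ ⟨ha, hb⟩ i j
    have hentry : (aztecPolyA a b).map (eval z) =
        !![z + a * b⁻¹, a + b; z * (a⁻¹ + b⁻¹), z + b * a⁻¹] := by
      ext i j
      fin_cases i <;> fin_cases j <;> simp [aztecPolyA]
    rw [← map_apply (f := eval z), hentry]
    fin_cases i <;> fin_cases j <;> dsimp <;> positivity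
  induction l, hne using List.recNeNil generalizing i j with
  | singleton c => simpa [aztecPolyT] using hA c (hl c (by simp)) i j
  | cons c l _ ih =>
    obtain ⟨hc, hl⟩ := List.forall_mem_cons.1 hl
    rw [aztecPolyT_cons, mul_apply, eval_finsetSum]
    refine Finset.sum_pos (fun m _ => ?_) Finset.univ_nonempty
    rw [eval_mul]
    exact mul_pos (hA c hc i m) (ih hl m j)

theorem eval_discr_aztecPolyT_pos (hl : ∀ c ∈ l, 0 < c.1 ∧ 0 < c.2) (hne : l ≠ []) {z : ℝ}
    (hz : 0 < z) : 0 < (aztecPolyT l).discr.eval z := by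
  have h01 := eval_aztecPolyT_pos hl hne hz 0 1
  have h10 := eval_aztecPolyT_pos hl hne hz 1 0
  simp only [discr_fin_two_eq, eval_add, eval_mul, eval_pow, eval_sub, eval_ofNat]
  positivity

theorem root_nonpos_of_discr_aztecPolyT (hl : ∀ c ∈ l, 0 < c.1 ∧ 0 < c.2) (hne : l ≠ [])
    {q p₀ : ℝ[X]} (hfact : (aztecPolyT l).discr = q ^ 2 * p₀) {r : ℝ} (hr : p₀.eval r = 0) :
    r ≤ 0 := by
  by_contra! hr0
  have := eval_discr_aztecPolyT_pos hl hne hr0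
  rw [hfact, eval_mul, hr, mul_zero] at this
  exact this.false

end Parameters

/-! ### Surjectivity between consecutive zeros -/

theorem two_mul_mul_eq_of_sq_sub_eq {A : Type*} [CommRing A] [IsDomain A] {τ q p₀ R : A[X]}
    {k : ℕ} (hfact : τ ^ 2 - 4 * (X - 1) ^ (2 * k) = q ^ 2 * p₀)
    (hR : (X - 1) * derivative τ - C (k : A) * τ = q * R) (hq : q ≠ 0) :
    2 * τ * R =
      (X - 1) * (2 * derivative q * p₀ + q * derivative p₀) - 2 * C (k : A) * q * p₀ := by
  have hpow : ∀ n : ℕ, (X - 1 : A[X]) * derivative ((X - 1) ^ n) = C (n : A) * (X - 1) ^ n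
    | 0 => by simp
    | n + 1 => by
      rw [derivative_pow_succ, derivative_sub, derivative_X, derivative_one, Nat.cast_succ]
      ring
  have hderiv := congrArg derivative hfact
  simp only [derivative_sub, derivative_sq, derivative_mul, derivative_ofNat, C_ofNat] at hderiv
  have hpow2k := hpow (2 * k)
  rw [Nat.cast_mul, Nat.cast_ofNat, C_mul, C_ofNat] at hpow2k
  refine mul_left_cancel₀ hq ?_
  linear_combination -2 * τ * hR + (X - 1) * hderiv - 2 * C (k : A) * hfact + 4 * hpow2k

section Surjectivity

variable {τ q p₀ R : ℝ[X]} {k : ℕ}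

theorem eval_ne_zero_of_sq_sub_eq (hfact : τ ^ 2 - 4 * (X - 1) ^ (2 * k) = q ^ 2 * p₀) {z : ℝ}
    (hz : z ≠ 1) (hnonneg : 0 ≤ p₀.eval z) : τ.eval z ≠ 0 := by
  intro hτ
  have h := congrArg (eval z) hfact
  simp only [eval_sub, eval_mul, eval_pow, eval_X, eval_one, eval_ofNat, hτ] at h
  have : 0 < (z - 1) ^ (2 * k) := (even_two_mul k).pow_pos (sub_ne_zero.2 hz)
  linarith [mul_nonneg (sq_nonneg (q.eval z)) hnonneg]

theorem eval_mul_eval_neg_of_sq_sub_eq (hfact : τ ^ 2 - 4 * (X - 1) ^ (2 * k) = q ^ 2 * p₀)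
    (hR : (X - 1) * derivative τ - C (k : ℝ) * τ = q * R) (hsq : Squarefree p₀) {a b : ℝ}
    (hab : a < b) (hb1 : b < 1) (ha : p₀.eval a = 0) (hb : p₀.eval b = 0)
    (hnonneg : ∀ z ∈ Set.Icc a b, 0 ≤ p₀.eval z)
    (hq : ∀ z < 1, q.eval z = 0 → p₀.eval z < 0) :
    R.eval a * R.eval b < 0 := by
  have ha_mem := Set.left_mem_Icc.2 hab.le
  have hb_mem := Set.right_mem_Icc.2 hab.le
  have hqne : ∀ z ∈ Set.Icc a b, q.eval z ≠ 0 := fun z hz hqz =>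
    (hq z (hz.2.trans_lt hb1) hqz).not_ge (hnonneg z hz)
  have hq0 : q ≠ 0 := fun h => hqne a ha_mem (by rw [h, eval_zero])
  have hRroot : ∀ e, p₀.eval e = 0 →
      2 * τ.eval e * R.eval e = (e - 1) * q.eval e * (derivative p₀).eval e := fun e he => by
    have h := congrArg (eval e) (two_mul_mul_eq_of_sq_sub_eq hfact hR hq0)
    simp only [eval_sub, eval_add, eval_mul, eval_X, eval_one, eval_ofNat, he] at h
    linear_combination h
  have hprod : 4 * (τ.eval a * τ.eval b) * (R.eval a * R.eval b) =
      (1 - a) * (1 - b) * (q.eval a * q.eval b) *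
        ((derivative p₀).eval a * (derivative p₀).eval b) := by
    linear_combination 2 * τ.eval b * R.eval b * hRroot a ha +
      (a - 1) * q.eval a * (derivative p₀).eval a * hRroot b hb
  have hqpos : 0 < q.eval a * q.eval b :=
    mul_pos_of_isPreconnected_of_ne_zero isPreconnected_Icc q.continuousOn hqne ha_mem hb_mem
  have hτpos : 0 < τ.eval a * τ.eval b :=
    mul_pos_of_isPreconnected_of_ne_zero isPreconnected_Icc τ.continuousOn
      (fun z hz => eval_ne_zero_of_sq_sub_eq hfact (hz.2.trans_lt hb1).ne (hnonneg z hz))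
      ha_mem hb_mem
  refine neg_of_mul_neg_right (a := 4 * (τ.eval a * τ.eval b)) (hprod.trans_lt ?_) (by positivity)
  exact mul_neg_of_pos_of_neg
    (mul_pos (mul_pos (sub_pos.2 (hab.trans hb1)) (sub_pos.2 hb1)) hqpos)
    (eval_derivative_mul_eval_derivative_neg hsq hab ha hb hnonneg)

theorem exists_aztecg_eq (hfact : τ ^ 2 - 4 * (X - 1) ^ (2 * k) = q ^ 2 * p₀)
    (hR : (X - 1) * derivative τ - C (k : ℝ) * τ = q * R) (hsq : Squarefree p₀) {a b : ℝ}
    (hab : a < b) (hb0 : b < 0) (ha : p₀.eval a = 0) (hb : p₀.eval b = 0)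
    (hpos : ∀ z ∈ Set.Ioo a b, 0 < p₀.eval z) (hq : ∀ z < 1, q.eval z = 0 → p₀.eval z < 0)
    (y : ℝ) : ∃ z ∈ Set.Ioo a b, aztecg R p₀ z = y := by
  have hnonneg : ∀ z ∈ Set.Icc a b, 0 ≤ p₀.eval z := by
    rw [← closure_Ioo hab.ne]
    exact fun z hz => closure_minimal (fun t ht => (hpos t ht).le)
      (isClosed_Ici.preimage p₀.continuous) hz
  have hRsign := eval_mul_eval_neg_of_sq_sub_eq hfact hR hsq hab (hb0.trans one_pos) ha hb
    hnonneg hq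
  have ha0 := hab.trans hb0
  have hsign : a * R.eval a / (a - 1) * (b * R.eval b / (b - 1)) < 0 := by
    have : 0 < a / (a - 1) * (b / (b - 1)) :=
      mul_pos (div_pos_of_neg_of_neg ha0 (by linarith)) (div_pos_of_neg_of_neg hb0 (by linarith))
    linear_combination mul_neg_of_pos_of_neg this hRsign
  have hcont : ContinuousOn (fun z => z * R.eval z / (z - 1)) (Set.Icc a b) :=
    ContinuousOn.div (by fun_prop) (by fun_prop) fun z hz => by linarith [hz.2]
  simpa only [aztecg, div_div] using
    exists_div_sqrt_eq hab.le hcont p₀.continuousOn ha hb hpos hsign y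

end Surjectivity

theorem stmt15_general (k : ℕ) (α β : Fin k → ℝ)
    (hα : ∀ m, 0 < α m) (hβ : ∀ m, 0 < β m)
    (trT p : Polynomial ℝ)
    (htr : ∀ z : ℂ, Polynomial.aeval z trT = Matrix.trace (aztecT α β z))
    (hp : ∀ z : ℂ, Polynomial.aeval z p
        = (Matrix.trace (aztecT α β z)) ^ 2 - 4 * (z - 1) ^ (2 * k))
    (k' : ℕ) (hk'k : k' ≤ k)
    (q p₀ : Polynomial ℝ) (hp₀sf : Squarefree p₀)
    (hp₀lead : 0 < p₀.leadingCoeff) (hfact : p = q ^ 2 * p₀)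
    (hp₀deg : p₀.natDegree = 2 * k' - 1)
    (x : Fin (2 * k' - 1) → ℝ) (hxanti : StrictAnti x)
    (hxroot : ∀ i, p₀.eval (x i) = 0)
    (R : Polynomial ℝ)
    (hR : (X - 1) * Polynomial.derivative trT - Polynomial.C (k : ℝ) * trT = q * R) :
    ∀ ℓ : ℕ, ∀ _h1 : 1 ≤ ℓ, ∀ _h2 : ℓ ≤ k' - 1,
      (∀ z ∈ Set.Ioo (x ⟨2 * ℓ, by omega⟩) (x ⟨2 * ℓ - 1, by omega⟩), 0 < p₀.eval z) ∧
      ∀ y : ℝ, ∃ z ∈ Set.Ioo (x ⟨2 * ℓ, by omega⟩) (x ⟨2 * ℓ - 1, by omega⟩),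
        aztecg R p₀ z = y := by
  intro ℓ h1 h2
  have hl : ∀ c ∈ List.ofFn fun m => (α m, β m), 0 < c.1 ∧ 0 < c.2 :=
    List.forall_mem_ofFn_iff.2 fun m => ⟨hα m, hβ m⟩
  have hlen : 2 ≤ (List.ofFn fun m => (α m, β m)).length := by
    rw [List.length_ofFn]
    omega
  have hdiscr : (aztecPolyT (List.ofFn fun m => (α m, β m))).discr = q ^ 2 * p₀ :=
    (eq_of_forall_aeval_eq (S := ℂ) fun z => by
      rw [hp, aeval_discr_aztecPolyT (fun m => (hα m).ne') fun m => (hβ m).ne']).trans hfact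
  have htrT : trT ^ 2 - 4 * (X - 1) ^ (2 * k) = q ^ 2 * p₀ :=
    (eq_of_forall_aeval_eq (S := ℂ) fun z => by
      simp only [hp, htr, map_sub, map_mul, map_pow, aeval_X, map_one, map_ofNat]).trans hfact
  have hneg : x ⟨2 * ℓ - 1, by omega⟩ < 0 :=
    (hxanti (show (⟨0, by omega⟩ : Fin (2 * k' - 1)) < _ from Fin.mk_lt_mk.2 (by omega))).trans_le
      (root_nonpos_of_discr_aztecPolyT hl (List.ne_nil_of_length_pos (by omega)) hdiscr (hxroot _))
  have hpos := fun z => eval_pos_of_mem_Ioo_of_even (z := z) hp₀lead hp₀deg hxanti hxroot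
    (i := ⟨2 * ℓ, by omega⟩) (j := ⟨2 * ℓ - 1, by omega⟩) (even_two_mul ℓ) (by grind)
  exact ⟨hpos, exists_aztecg_eq htrT hR hp₀sf (hxanti (Fin.mk_lt_mk.2 (by omega))) hneg
    (hxroot _) (hxroot _) hpos fun z hz => eval_neg_of_discr_eq_sq_mul
      (fun u hu => angularForm_aztecPolyT_pos hl hlen hz.ne hu) hdiscr⟩

/-- for each `ℓ = 1,…,k′−1`, `p₀ > 0` on `I_ℓ = (x_{2ℓ}, x_{2ℓ−1})`, and
`g : I_ℓ → ℝ` is surjective onto `ℝ`. -/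
theorem stmt15 (k : ℕ) (hk : 1 ≤ k) (α β : Fin k → ℝ)
    (hα : ∀ m, 0 < α m) (hβ : ∀ m, 0 < β m)
    (hprod : ∏ m, α m = ∏ m, β m)
    (trT p : Polynomial ℝ)
    (htr : ∀ z : ℂ, Polynomial.aeval z trT = Matrix.trace (aztecT α β z))
    (hp : ∀ z : ℂ, Polynomial.aeval z p
        = (Matrix.trace (aztecT α β z)) ^ 2 - 4 * (z - 1) ^ (2 * k))
    (k' : ℕ) (hk'1 : 1 ≤ k') (hk'k : k' ≤ k)
    (q p₀ : Polynomial ℝ) (hq : q.Monic) (hp₀sf : Squarefree p₀)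
    (hp₀lead : 0 < p₀.leadingCoeff) (hfact : p = q ^ 2 * p₀)
    (hp₀deg : p₀.natDegree = 2 * k' - 1)
    (x : Fin (2 * k' - 1) → ℝ) (hx0 : x ⟨0, by omega⟩ = 0) (hxanti : StrictAnti x)
    (hxroot : ∀ i, p₀.eval (x i) = 0)
    (R : Polynomial ℝ)
    (hR : (X - 1) * Polynomial.derivative trT - Polynomial.C (k : ℝ) * trT = q * R)
    (hRdeg : R.natDegree = k' - 1) :
    ∀ ℓ : ℕ, ∀ _h1 : 1 ≤ ℓ, ∀ _h2 : ℓ ≤ k' - 1,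
      (∀ z ∈ Set.Ioo (x ⟨2 * ℓ, by omega⟩) (x ⟨2 * ℓ - 1, by omega⟩), 0 < p₀.eval z) ∧
      ∀ y : ℝ, ∃ z ∈ Set.Ioo (x ⟨2 * ℓ, by omega⟩) (x ⟨2 * ℓ - 1, by omega⟩),
        aztecg R p₀ z = y :=
  stmt15_general k α β hα hβ trT p htr hp k' hk'k q p₀ hp₀sf hp₀lead hfact hp₀deg x hxanti hxroot
    R hR
end

section
/- For every x ∈ S = (0,1) ∪ (1,∞): the derivative at x of the function y ↦ (y−1)·ρ′(y)/ρ(y) is nonzero, and the derivative at x of the function y ↦ y(y−1)·ρ′(y)/ρ(y) is nonzero. -/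
open Polynomial Matrix

/-!
Write `z = ζ²` with `Re ζ > 0`. Conjugation by `diag(1, ζ⁻¹)` splits each `A_m(z)` into two half
steps, each of which expands the indefinite form `Re (w₀ w̄₁)` by more than `|z - 1|`. Hence `Φ(z)`
has no eigenvalue of modulus one for `z ∉ (-∞, 0] ∪ {1}`, so that the polynomials
`(z - 1)^k (Tr Φ ∓ 2)` split over `ℝ` with all their zeros in `(-∞, 0] ∪ {1}`.

Since `Tr Φ = ρ + ρ⁻¹`, putting `σ = (ρ + 1) / (ρ - 1) > 0` gives `(log (Tr Φ - 2))′ = σ ρ′/ρ` and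
`(log (Tr Φ + 2))′ = σ⁻¹ ρ′/ρ`. For any weight `w`, the derivative of `w ρ′/ρ` is therefore a
positive combination of those of `w (log (Tr Φ ∓ 2))′`, the terms in `σ′` cancelling. By partial
fractions the latter are, for `w = y - 1`, the sum over the zeros `r` of `(1 - r) / (x - r)² ≥ 0`
and, for `w = y (y - 1)`, the sum of `1 - r (r - 1) / (x - r)² ≤ 1` minus the order `k` of the pole
at `1`. Strictness comes from a zero of `Tr Φ + 2` other than `1` in the first case, and from
`(z - 1)^k (Tr Φ - 2)` having degree less than `k` in the second.
-/

open Filter Topology ComplexConjugate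

section CrossForm

/-- The indefinite Hermitian form `Re (w₀ w̄₁)` on `ℂ²`, which the transfer matrices expand. -/
noncomputable def crossForm (w : Fin 2 → ℂ) : ℝ := (w 0 * conj (w 1)).re

/-- The matrix of determinant `ζ² - 1` such that `aztecA a b (ζ ^ 2)` is diagonally conjugate to
`halfStep a ζ * halfStep b ζ`. -/
noncomputable def halfStep (a : ℝ) (ζ : ℂ) : Matrix (Fin 2) (Fin 2) ℂ :=
  !![ζ, (a : ℂ); (a : ℂ)⁻¹, ζ]

/-- The pullback of `crossForm` by the diagonal matrix conjugating `aztecA a b (ζ ^ 2)` to a product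
of half steps. -/
noncomputable def sqrtForm (ζ : ℂ) (v : Fin 2 → ℂ) : ℝ :=
  crossForm (diagonal ![1, ζ⁻¹] *ᵥ v)

lemma crossForm_smul (μ : ℂ) (w : Fin 2 → ℂ) : crossForm (μ • w) = ‖μ‖ ^ 2 * crossForm w := by
  rw [crossForm, crossForm, ← Complex.re_ofReal_mul, Complex.ofReal_pow, ← Complex.mul_conj']
  simp only [Pi.smul_apply, smul_eq_mul, map_mul]
  ring_nf

lemma sqrtForm_smul (ζ μ : ℂ) (v : Fin 2 → ℂ) : sqrtForm ζ (μ • v) = ‖μ‖ ^ 2 * sqrtForm ζ v := by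
  rw [sqrtForm, mulVec_smul, crossForm_smul, sqrtForm]

lemma norm_sub_one_sq_lt {ζ : ℂ} (hζ : 0 < ζ.re) (hζ1 : ζ ≠ 1) : ‖ζ - 1‖ ^ 2 < ‖ζ ^ 2 - 1‖ := by
  have closer : ‖ζ - 1‖ < ‖ζ + 1‖ := by
    rw [← sq_lt_sq₀ (norm_nonneg _) (norm_nonneg _), ← Complex.normSq_eq_norm_sq,
      ← Complex.normSq_eq_norm_sq, Complex.normSq_sub, Complex.normSq_add]
    simp only [map_one, mul_one]
    linarith
  calc ‖ζ - 1‖ ^ 2 = ‖ζ - 1‖ * ‖ζ - 1‖ := sq _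
    _ < ‖ζ - 1‖ * ‖ζ + 1‖ := mul_lt_mul_of_pos_left closer (norm_sub_pos_iff.2 hζ1)
    _ = ‖ζ ^ 2 - 1‖ := by rw [← norm_mul]; ring_nf

lemma norm_sq_sub_one_le (ζ : ℂ) : ‖ζ ^ 2 - 1‖ ≤ ‖ζ‖ ^ 2 + 1 :=
  (norm_sub_le _ _).trans_eq (by rw [norm_pow, norm_one])

lemma crossForm_halfStep {a : ℝ} (ha : a ≠ 0) (ζ : ℂ) (w : Fin 2 → ℂ) :
    crossForm (halfStep a ζ *ᵥ w) =
      ζ.re * (‖w 0‖ ^ 2 / a + a * ‖w 1‖ ^ 2) + (‖ζ‖ ^ 2 + 1) * crossForm w := by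
  simp only [crossForm, halfStep, mulVec, dotProduct, Fin.sum_univ_two, ← Complex.ofReal_inv,
    ← Complex.normSq_eq_norm_sq, Complex.normSq_apply]
  simp only [of_apply, cons_val', cons_val_zero, cons_val_fin_one, cons_val_one, map_add, map_mul,
    Complex.conj_ofReal, Complex.mul_re, Complex.mul_im, Complex.add_re, Complex.add_im,
    Complex.ofReal_re, Complex.ofReal_im, Complex.conj_re, Complex.conj_im]
  field_simp
  ring

lemma neg_two_mul_crossForm_le {a : ℝ} (ha : 0 < a) (w : Fin 2 → ℂ) :
    -2 * crossForm w ≤ ‖w 0‖ ^ 2 / a + a * ‖w 1‖ ^ 2 := by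
  have square : ‖w 0‖ ^ 2 / a + a * ‖w 1‖ ^ 2 + 2 * crossForm w = ‖w 0 + a * w 1‖ ^ 2 / a := by
    simp only [crossForm, ← Complex.normSq_eq_norm_sq, Complex.normSq_apply]
    simp only [Complex.mul_re, Complex.mul_im, Complex.add_re, Complex.add_im, Complex.ofReal_re,
      Complex.ofReal_im, Complex.conj_re, Complex.conj_im]
    field_simp
    ring
  have : 0 ≤ ‖w 0 + a * w 1‖ ^ 2 / a := by positivity
  linarith

lemma mul_crossForm_lt_crossForm_halfStep {ζ : ℂ} (hζ : 0 < ζ.re) (hζ1 : ζ ≠ 1) {a : ℝ}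
    (ha : 0 < a) {w : Fin 2 → ℂ} (hw : w ≠ 0) :
    ‖ζ ^ 2 - 1‖ * crossForm w < crossForm (halfStep a ζ *ᵥ w) := by
  set P := ‖w 0‖ ^ 2 / a + a * ‖w 1‖ ^ 2
  have P_pos : 0 < P := by
    rcases not_and_or.1 (mt (fun h => funext (Fin.forall_fin_two.2 h)) hw) with h | h
    · have := norm_pos_iff.2 h
      positivity
    · have := norm_pos_iff.2 h
      positivity
  have norm_sub : ‖ζ - 1‖ ^ 2 = ‖ζ‖ ^ 2 + 1 - 2 * ζ.re := by
    rw [← Complex.normSq_eq_norm_sq, ← Complex.normSq_eq_norm_sq, Complex.normSq_sub]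
    simp
  have lower := norm_sub_one_sq_lt hζ hζ1
  rw [norm_sub] at lower
  have nonneg : 0 ≤ (‖ζ‖ ^ 2 + 1 - ‖ζ ^ 2 - 1‖) * (P + 2 * crossForm w) :=
    mul_nonneg (sub_nonneg.2 (norm_sq_sub_one_le ζ)) (by linarith [neg_two_mul_crossForm_le ha w])
  have pos : 0 < (2 * ζ.re - (‖ζ‖ ^ 2 + 1 - ‖ζ ^ 2 - 1‖)) * P := mul_pos (by linarith) P_pos
  rw [crossForm_halfStep ha.ne']
  linarith

lemma mul_crossForm_le_crossForm_halfStep {ζ : ℂ} (hζ : 0 < ζ.re) (hζ1 : ζ ≠ 1) {a : ℝ}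
    (ha : 0 < a) (w : Fin 2 → ℂ) :
    ‖ζ ^ 2 - 1‖ * crossForm w ≤ crossForm (halfStep a ζ *ᵥ w) := by
  rcases eq_or_ne w 0 with rfl | hw
  · simp [crossForm]
  · exact (mul_crossForm_lt_crossForm_halfStep hζ hζ1 ha hw).le

lemma diagonal_mul_aztecA {ζ : ℂ} (hζ : ζ ≠ 0) (a b : ℝ) :
    diagonal ![1, ζ⁻¹] * aztecA a b (ζ ^ 2) =
      halfStep a ζ * halfStep b ζ * diagonal ![1, ζ⁻¹] := by
  ext i j
  fin_cases i <;> fin_cases j <;>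
    simp only [aztecA, halfStep, diagonal_mul, mul_diagonal, mul_fin_two, of_apply, cons_val',
      cons_val_zero, cons_val_one, cons_val_fin_one, Fin.zero_eta, Fin.mk_one, Fin.isValue] <;>
    field_simp <;> ring

lemma mul_sqrtForm_lt_sqrtForm_aztecA {ζ : ℂ} (hζ : 0 < ζ.re) (hζ1 : ζ ≠ 1) {a b : ℝ}
    (ha : 0 < a) (hb : 0 < b) {v : Fin 2 → ℂ} (hv : v ≠ 0) :
    ‖ζ ^ 2 - 1‖ ^ 2 * sqrtForm ζ v < sqrtForm ζ (aztecA a b (ζ ^ 2) *ᵥ v) := by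
  have hζ0 : ζ ≠ 0 := by rintro rfl; simp at hζ
  have norm_pos : 0 < ‖ζ ^ 2 - 1‖ := (sq_nonneg _).trans_lt (norm_sub_one_sq_lt hζ hζ1)
  set w := diagonal ![1, ζ⁻¹] *ᵥ v with hw
  have w_ne : w ≠ 0 := fun h => hv <| eq_zero_of_mulVec_eq_zero (by simp [hζ0]) h
  calc ‖ζ ^ 2 - 1‖ ^ 2 * crossForm w = ‖ζ ^ 2 - 1‖ * (‖ζ ^ 2 - 1‖ * crossForm w) := by ring
    _ < ‖ζ ^ 2 - 1‖ * crossForm (halfStep b ζ *ᵥ w) :=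
      mul_lt_mul_of_pos_left (mul_crossForm_lt_crossForm_halfStep hζ hζ1 hb w_ne) norm_pos
    _ ≤ crossForm (halfStep a ζ *ᵥ halfStep b ζ *ᵥ w) :=
      mul_crossForm_le_crossForm_halfStep hζ hζ1 ha _
    _ = sqrtForm ζ (aztecA a b (ζ ^ 2) *ᵥ v) := by
      rw [sqrtForm, hw, mulVec_mulVec, mulVec_mulVec, mulVec_mulVec, diagonal_mul_aztecA hζ0]

end CrossForm

section Eigenvalues

variable {k : ℕ} {α β : Fin k → ℝ}

lemma aztecT_succ {k : ℕ} (α β : Fin (k + 1) → ℝ) (z : ℂ) :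
    aztecT α β z =
      aztecA (α 0) (β 0) z * aztecT (fun m => α m.succ) (fun m => β m.succ) z := by
  simp [aztecT, List.ofFn_succ]

lemma det_aztecA {a b : ℝ} (ha : a ≠ 0) (hb : b ≠ 0) (z : ℂ) :
    (aztecA a b z).det = (z - 1) ^ 2 := by
  have ha' : (a : ℂ) ≠ 0 := Complex.ofReal_ne_zero.2 ha
  have hb' : (b : ℂ) ≠ 0 := Complex.ofReal_ne_zero.2 hb
  rw [aztecA, det_fin_two_of]
  field_simp
  ring

lemma det_aztecT (hα : ∀ m, α m ≠ 0) (hβ : ∀ m, β m ≠ 0) (z : ℂ) :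
    (aztecT α β z).det = ((z - 1) ^ k) ^ 2 := by
  induction k with
  | zero => simp [aztecT]
  | succ k ih =>
    rw [aztecT_succ, det_mul, det_aztecA (hα 0) (hβ 0), ih (fun m => hα _) (fun m => hβ _)]
    ring

lemma mul_sqrtForm_lt_sqrtForm_aztecT {ζ : ℂ} (hζ : 0 < ζ.re) (hζ1 : ζ ≠ 1) (hk : 1 ≤ k)
    (hα : ∀ m, 0 < α m) (hβ : ∀ m, 0 < β m) {v : Fin 2 → ℂ} (hv : v ≠ 0) :
    (‖ζ ^ 2 - 1‖ ^ k) ^ 2 * sqrtForm ζ v < sqrtForm ζ (aztecT α β (ζ ^ 2) *ᵥ v) := by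
  have norm_pos : 0 < ‖ζ ^ 2 - 1‖ := (sq_nonneg _).trans_lt (norm_sub_one_sq_lt hζ hζ1)
  induction k, hk using Nat.le_induction with
  | base => simpa [aztecT] using mul_sqrtForm_lt_sqrtForm_aztecA hζ hζ1 (hα 0) (hβ 0) hv
  | succ k _ ih =>
    set T := aztecT (fun m => α (Fin.succ m)) (fun m => β (Fin.succ m)) (ζ ^ 2)
    have det_ne : T.det ≠ 0 := by
      rw [det_aztecT (fun m => (hα _).ne') (fun m => (hβ _).ne')]
      exact pow_ne_zero _ (pow_ne_zero _ (norm_pos_iff.1 norm_pos))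
    have Tv_ne : T *ᵥ v ≠ 0 := fun h => hv (eq_zero_of_mulVec_eq_zero det_ne h)
    calc (‖ζ ^ 2 - 1‖ ^ (k + 1)) ^ 2 * sqrtForm ζ v
        = ‖ζ ^ 2 - 1‖ ^ 2 * ((‖ζ ^ 2 - 1‖ ^ k) ^ 2 * sqrtForm ζ v) := by ring
      _ < ‖ζ ^ 2 - 1‖ ^ 2 * sqrtForm ζ (T *ᵥ v) :=
        mul_lt_mul_of_pos_left (ih (fun m => hα _) (fun m => hβ _)) (pow_pos norm_pos 2)
      _ < sqrtForm ζ (aztecA (α 0) (β 0) (ζ ^ 2) *ᵥ T *ᵥ v) :=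
        mul_sqrtForm_lt_sqrtForm_aztecA hζ hζ1 (hα 0) (hβ 0) Tv_ne
      _ = sqrtForm ζ (aztecT α β (ζ ^ 2) *ᵥ v) := by rw [mulVec_mulVec, ← aztecT_succ]

lemma exists_sq_eq_of_mem_slitPlane {z : ℂ} (hz : z ∈ Complex.slitPlane) :
    ∃ ζ : ℂ, 0 < ζ.re ∧ ζ ^ 2 = z := by
  refine ⟨z.sqrt, ?_, Complex.cpow_nat_inv_pow z two_ne_zero⟩
  rw [Complex.sqrt, Complex.cpow_inv_two_re]
  refine Real.sqrt_pos.2 (half_pos ?_)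
  rcases hz with hre | him
  · positivity
  · linarith [neg_abs_le z.re, Complex.abs_re_lt_norm.2 him]

lemma norm_ne_of_aztecT_mulVec_eq_smul (hk : 1 ≤ k) (hα : ∀ m, 0 < α m) (hβ : ∀ m, 0 < β m)
    {z : ℂ} (hz : z ∈ Complex.slitPlane) (hz1 : z ≠ 1) {μ : ℂ} {v : Fin 2 → ℂ} (hv : v ≠ 0)
    (h : aztecT α β z *ᵥ v = μ • v) : ‖μ‖ ≠ ‖z - 1‖ ^ k := by
  obtain ⟨ζ, hζ, rfl⟩ := exists_sq_eq_of_mem_slitPlane hz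
  intro hμ
  have expand := mul_sqrtForm_lt_sqrtForm_aztecT hζ (by rintro rfl; simp at hz1) hk hα hβ hv
  rw [h, sqrtForm_smul, hμ] at expand
  exact expand.false

lemma trace_aztecT_ne (hk : 1 ≤ k) (hα : ∀ m, 0 < α m) (hβ : ∀ m, 0 < β m)
    {z : ℂ} (hz : z ∈ Complex.slitPlane) (hz1 : z ≠ 1) {ε : ℝ} (hε : |ε| = 1) :
    (aztecT α β z).trace ≠ 2 * ε * (z - 1) ^ k := by
  intro htr
  set T := aztecT α β z
  set μ : ℂ := ε * (z - 1) ^ k with hμ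
  have hε2 : (ε : ℂ) ^ 2 = 1 := by
    rw [← Complex.ofReal_pow, ← sq_abs, hε, one_pow, Complex.ofReal_one]
  have hdet : T.det = μ ^ 2 := by
    rw [det_aztecT (fun m => (hα m).ne') (fun m => (hβ m).ne'), hμ, mul_pow, hε2, one_mul]
  have eigen : (scalar (Fin 2) μ - T).det = 0 := by
    rw [← eval_charpoly, charpoly_fin_two, htr, hdet]
    simp only [eval_add, eval_sub, eval_mul, eval_pow, eval_X, eval_C, hμ]
    ring
  obtain ⟨v, hv, hTv⟩ := exists_mulVec_eq_zero_iff.2 eigen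
  rw [sub_mulVec, sub_eq_zero, scalar_apply, ← smul_one_eq_diagonal, smul_mulVec,
    one_mulVec] at hTv
  refine norm_ne_of_aztecT_mulVec_eq_smul hk hα hβ hz hz1 hv hTv.symm ?_
  rw [hμ, norm_mul, norm_pow, Complex.norm_real, Real.norm_eq_abs, hε, one_mul]

end Eigenvalues

section TracePolynomial

/-- The matrix `aztecA a b` with its argument replaced by the indeterminate. -/
noncomputable def aztecAPoly (a b : ℝ) : Matrix (Fin 2) (Fin 2) ℝ[X] :=
  !![X + C (a * b⁻¹), C (a + b); X * C (a⁻¹ + b⁻¹), X + C (b * a⁻¹)]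

/-- The matrix `aztecT α β` with its argument replaced by the indeterminate. -/
noncomputable def aztecTPoly {k : ℕ} (α β : Fin k → ℝ) : Matrix (Fin 2) (Fin 2) ℝ[X] :=
  (List.ofFn fun m => aztecAPoly (α m) (β m)).prod

lemma natDegree_matrix_mul_apply_le {R l m n : Type*} [Semiring R] [Fintype m]
    {M : Matrix l m R[X]} {N : Matrix m n R[X]} {d e : ℕ} (hM : ∀ i j, (M i j).natDegree ≤ d)
    (hN : ∀ i j, (N i j).natDegree ≤ e) (i : l) (j : n) : ((M * N) i j).natDegree ≤ d + e :=
  natDegree_sum_le_of_forall_le _ _ fun p _ => natDegree_mul_le_of_le (hM i p) (hN p j)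

lemma map_coeff_matrix_mul {R l m n : Type*} [Semiring R] [Fintype m]
    {M : Matrix l m R[X]} {N : Matrix m n R[X]} {d e : ℕ} (hM : ∀ i j, (M i j).natDegree ≤ d)
    (hN : ∀ i j, (N i j).natDegree ≤ e) :
    (M * N).map (fun f => f.coeff (d + e)) =
      M.map (fun f => f.coeff d) * N.map (fun f => f.coeff e) := by
  ext i j
  simp only [map_apply, mul_apply, finsetSum_coeff]
  exact Finset.sum_congr rfl fun p _ => coeff_mul_add_eq_of_natDegree_le (hM i p) (hN p j)

lemma natDegree_aztecAPoly_apply_le (a b : ℝ) (i j : Fin 2) :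
    (aztecAPoly a b i j).natDegree ≤ 1 := by
  fin_cases i <;> fin_cases j <;> simp only [aztecAPoly] <;> dsimp <;> compute_degree!

lemma map_coeff_aztecAPoly (a b : ℝ) :
    (aztecAPoly a b).map (fun f => f.coeff 1) = !![1, 0; a⁻¹ + b⁻¹, 1] := by
  ext i j
  fin_cases i <;> fin_cases j <;> simp [aztecAPoly, coeff_C, -map_add, -map_mul]

variable {k : ℕ} (α β : Fin k → ℝ)

lemma aztecTPoly_succ {k : ℕ} (α β : Fin (k + 1) → ℝ) :
    aztecTPoly α β =
      aztecAPoly (α 0) (β 0) * aztecTPoly (fun m => α m.succ) (fun m => β m.succ) := by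
  simp [aztecTPoly, List.ofFn_succ]

lemma natDegree_aztecTPoly_apply_le (i j : Fin 2) : (aztecTPoly α β i j).natDegree ≤ k := by
  induction k generalizing i j with
  | zero => fin_cases i <;> fin_cases j <;> simp [aztecTPoly]
  | succ k ih =>
    rw [aztecTPoly_succ]
    exact (natDegree_matrix_mul_apply_le (natDegree_aztecAPoly_apply_le _ _) (ih _ _) i j).trans_eq
      (add_comm 1 k)

lemma exists_map_coeff_aztecTPoly :
    ∃ c : ℝ, (aztecTPoly α β).map (fun f => f.coeff k) = !![1, 0; c, 1] := by
  induction k with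
  | zero => exact ⟨0, by ext i j; fin_cases i <;> fin_cases j <;> simp [aztecTPoly]⟩
  | succ k ih =>
    obtain ⟨c, hc⟩ := ih (fun m => α m.succ) (fun m => β m.succ)
    refine ⟨(α 0)⁻¹ + (β 0)⁻¹ + c, ?_⟩
    have mul_coeff := map_coeff_matrix_mul (natDegree_aztecAPoly_apply_le (α 0) (β 0))
      (natDegree_aztecTPoly_apply_le (fun m => α m.succ) (fun m => β m.succ))
    rw [← aztecTPoly_succ, hc, map_coeff_aztecAPoly, add_comm 1 k] at mul_coeff
    simpa using mul_coeff

lemma map_aeval_aztecTPoly (z : ℂ) :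
    (aztecTPoly α β).map (aeval z) = aztecT α β z := by
  have factor (a b : ℝ) : (aeval z : ℝ[X] →ₐ[ℝ] ℂ).mapMatrix (aztecAPoly a b) = aztecA a b z := by
    ext i j
    fin_cases i <;> fin_cases j <;> simp [aztecAPoly, aztecA]
  rw [← AlgHom.mapMatrix_apply, aztecTPoly, map_list_prod, List.map_ofFn, aztecT]
  simp only [Function.comp_def, factor]

/-- The polynomial `Tr T - 2ε(z - 1)^k`; the discriminant polynomial of the paper is the product of
those for `ε = 1` and `ε = -1`. -/
noncomputable def discFactor (ε : ℝ) : ℝ[X] :=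
  (aztecTPoly α β).trace - C (2 * ε) * (X - 1) ^ k

lemma aeval_discFactor (ε : ℝ) (z : ℂ) :
    aeval z (discFactor α β ε) = (aztecT α β z).trace - 2 * ε * (z - 1) ^ k := by
  rw [← map_aeval_aztecTPoly, ← AddMonoidHom.coe_coe (aeval z), ← AddMonoidHom.map_trace]
  simp [discFactor]

lemma natDegree_discFactor_le (ε : ℝ) : (discFactor α β ε).natDegree ≤ k := by
  have h := natDegree_aztecTPoly_apply_le α β
  rw [discFactor, trace_fin_two]
  refine (natDegree_sub_le_of_le (natDegree_add_le_of_degree_le (h 0 0) (h 1 1))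
    (?_ : _ ≤ k)).trans_eq (max_self k)
  compute_degree!

lemma coeff_discFactor (ε : ℝ) : (discFactor α β ε).coeff k = 2 - 2 * ε := by
  obtain ⟨c, hc⟩ := exists_map_coeff_aztecTPoly α β
  have h00 : (aztecTPoly α β 0 0).coeff k = 1 := by simpa using congrFun₂ hc 0 0
  have h11 : (aztecTPoly α β 1 1).coeff k = 1 := by simpa using congrFun₂ hc 1 1
  have hpow : ((X - 1 : ℝ[X]) ^ k).coeff k = 1 := by
    simpa [coeff_one] using coeff_pow_of_natDegree_le (natDegree_X_sub_C_le (1 : ℝ)) (m := k)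
  rw [discFactor, trace_fin_two, coeff_sub, coeff_add, coeff_C_mul, h00, h11, hpow]
  ring

lemma discFactor_neg_one : discFactor α β (-1) = discFactor α β 1 + C 4 * (X - 1) ^ k := by
  simp only [discFactor, sub_add, ← sub_mul, ← C_sub]
  norm_num

variable {α β}

lemma natDegree_discFactor_one_lt (hk : 1 ≤ k) : (discFactor α β 1).natDegree < k := by
  refine (natDegree_discFactor_le α β 1).lt_of_ne fun h => ?_
  have lead : (discFactor α β 1).leadingCoeff = 0 := by
    rw [leadingCoeff, h, coeff_discFactor]
    ring
  rw [leadingCoeff_eq_zero.1 lead, natDegree_zero] at h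
  omega

variable (hk : 1 ≤ k) (hα : ∀ m, 0 < α m) (hβ : ∀ m, 0 < β m) {ε : ℝ} (hε : |ε| = 1)
include hk hα hβ hε

lemma aeval_discFactor_ne_zero {z : ℂ} (hz : z ∈ Complex.slitPlane) (hz1 : z ≠ 1) :
    aeval z (discFactor α β ε) ≠ 0 := by
  rw [aeval_discFactor, sub_ne_zero]
  exact trace_aztecT_ne hk hα hβ hz hz1 hε

lemma eval_discFactor_ne_zero {x : ℝ} (hx : 0 < x) (hx1 : x ≠ 1) :
    (discFactor α β ε).eval x ≠ 0 := by
  have h := aeval_discFactor_ne_zero hk hα hβ hε (Complex.ofReal_mem_slitPlane.2 hx)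
    (Complex.ofReal_ne_one.2 hx1)
  rwa [← Complex.coe_algebraMap, aeval_algebraMap_apply, coe_aeval_eq_eval, Ne,
    FaithfulSMul.algebraMap_eq_zero_iff] at h

lemma nonpos_or_eq_one_of_mem_roots_discFactor {r : ℝ} (hr : r ∈ (discFactor α β ε).roots) :
    r ≤ 0 ∨ r = 1 := by
  by_contra! h
  exact eval_discFactor_ne_zero hk hα hβ hε h.1 h.2 (mem_roots'.1 hr).2

lemma le_one_of_mem_roots_discFactor {r : ℝ} (hr : r ∈ (discFactor α β ε).roots) : r ≤ 1 :=
  (nonpos_or_eq_one_of_mem_roots_discFactor hk hα hβ hε hr).elim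
    (fun h => h.trans zero_le_one) le_of_eq

lemma splits_discFactor : (discFactor α β ε).Splits := by
  refine Splits.of_splits_map (algebraMap ℝ ℂ) (IsAlgClosed.splits _) fun z hz => ?_
  have root : aeval z (discFactor α β ε) = 0 := by
    simpa [eval_map_algebraMap] using (mem_roots'.1 hz).2
  rcases eq_or_ne z 1 with rfl | hz1
  · exact ⟨1, by simp⟩
  · have hz : z ∉ Complex.slitPlane := fun hz => aeval_discFactor_ne_zero hk hα hβ hε hz hz1 root
    rw [Complex.mem_slitPlane_iff, not_or, not_not] at hz
    exact ⟨z.re, Complex.ext rfl hz.2.symm⟩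

omit hε in
lemma exists_mem_roots_discFactor_neg_one_ne_one : ∃ r ∈ (discFactor α β (-1)).roots, r ≠ 1 := by
  by_contra! h
  have splits := splits_discFactor hk hα hβ (ε := -1) (by simp)
  have coeff : (discFactor α β (-1)).coeff k = 4 := by
    rw [coeff_discFactor]
    norm_num
  have deg : (discFactor α β (-1)).natDegree = k :=
    natDegree_eq_of_le_of_coeff_ne_zero (natDegree_discFactor_le α β (-1)) (by simp [coeff])
  have roots : (discFactor α β (-1)).roots = Multiset.replicate k 1 :=
    Multiset.eq_replicate.2 ⟨by rw [← splits.natDegree_eq_card_roots, deg], h⟩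
  have eq_pow : discFactor α β (-1) = C 4 * (X - 1) ^ k := by
    rw [splits.eq_prod_roots, roots, leadingCoeff, deg, coeff]
    simp
  have zero : discFactor α β 1 = 0 := by
    rwa [discFactor_neg_one, add_eq_right] at eq_pow
  exact eval_discFactor_ne_zero hk hα hβ abs_one two_pos (by norm_num) (by rw [zero, eval_zero])

end TracePolynomial

section LogDeriv

variable {𝕜 : Type*} [NontriviallyNormedField 𝕜]

lemma hasDerivAt_multiset_sum_map {ι : Type*} {f : ι → 𝕜 → 𝕜} {f' : ι → 𝕜} {x : 𝕜}
    (s : Multiset ι) (h : ∀ r ∈ s, HasDerivAt (f r) (f' r) x) :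
    HasDerivAt (fun y => (s.map fun r => f r y).sum) (s.map f').sum x := by
  induction s using Multiset.induction with
  | empty => simpa using hasDerivAt_const x (0 : 𝕜)
  | cons a s ih =>
    simp only [Multiset.map_cons, Multiset.sum_cons]
    exact (h a (Multiset.mem_cons_self a s)).fun_add
      (ih fun r hr => h r (Multiset.mem_cons_of_mem hr))

lemma hasDerivAt_div_sub {w : 𝕜 → 𝕜} {w' x r : 𝕜} (hw : HasDerivAt w w' x) (hr : x ≠ r) :
    HasDerivAt (fun y => w y / (y - r)) ((w' * (x - r) - w x) / (x - r) ^ 2) x := by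
  simpa using hw.fun_div ((hasDerivAt_id x).sub_const r) (sub_ne_zero.2 hr)

lemma logDeriv_eval_div_pow {q : 𝕜[X]} (hq : q.Splits) (k : ℕ) (a : 𝕜) {x : 𝕜}
    (hx : q.eval x ≠ 0) (hxa : x ≠ a) :
    logDeriv (fun y => q.eval y / (y - a) ^ k) x =
      (q.roots.map fun r => 1 / (x - r)).sum - k / (x - a) := by
  have hxa' : x - a ≠ 0 := sub_ne_zero.2 hxa
  have hd : DifferentiableAt 𝕜 (fun y : 𝕜 => y - a) x := by fun_prop
  rw [logDeriv_div (f := q.eval) (g := fun y => (y - a) ^ k) x hx (pow_ne_zero k hxa')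
      q.differentiableAt (hd.fun_pow k), logDeriv_fun_pow hd k, logDeriv_apply, Polynomial.deriv,
    hq.eval_derivative_div_eval_of_ne_zero hx, logDeriv_apply]
  simp [div_eq_mul_inv]

lemma hasDerivAt_mul_logDeriv_eval_div_pow {q : 𝕜[X]} (hq : q.Splits) (k : ℕ) (a : 𝕜)
    {w : 𝕜 → 𝕜} {w' x : 𝕜} (hw : HasDerivAt w w' x) (hx : q.eval x ≠ 0) (hxa : x ≠ a) :
    HasDerivAt (fun y => w y * logDeriv (fun u => q.eval u / (u - a) ^ k) y)
      ((q.roots.map fun r => (w' * (x - r) - w x) / (x - r) ^ 2).sum -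
        k * ((w' * (x - a) - w x) / (x - a) ^ 2)) x := by
  have root_ne (r : 𝕜) (hr : r ∈ q.roots) : x ≠ r := by
    rintro rfl
    exact hx (mem_roots'.1 hr).2
  have partial_fractions :=
    (hasDerivAt_multiset_sum_map q.roots fun r hr => hasDerivAt_div_sub hw (root_ne r hr)).fun_sub
      ((hasDerivAt_div_sub hw hxa).const_mul (k : 𝕜))
  refine partial_fractions.congr_of_eventuallyEq ?_
  filter_upwards [q.continuous.continuousAt.eventually_ne hx, eventually_ne_nhds hxa] with y hy hya
  rw [logDeriv_eval_div_pow hq k a hy hya, mul_sub, ← Multiset.sum_map_mul_left]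
  simp only [mul_one_div, mul_div_left_comm]

lemma add_inv_sub_two_mul {K : Type*} [Field K] {r ε : K} (hr : r ≠ 0) (hε : ε ^ 2 = 1) :
    r + r⁻¹ - 2 * ε = (r - ε) ^ 2 / r := by
  field_simp
  linear_combination -hε

lemma logDeriv_add_inv_sub {ρ : 𝕜 → 𝕜} {x ε : 𝕜} (hρ : DifferentiableAt 𝕜 ρ x) (h0 : ρ x ≠ 0)
    (hε : ε ^ 2 = 1) (hne : ρ x ≠ ε) :
    logDeriv (fun y => ρ y + (ρ y)⁻¹ - 2 * ε) x =
      logDeriv ρ x * ((ρ x + ε) / (ρ x - ε)) := by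
  have hd := (hρ.hasDerivAt.fun_add (hρ.hasDerivAt.fun_inv h0)).sub_const (2 * ε)
  have hne' : ρ x - ε ≠ 0 := sub_ne_zero.2 hne
  rw [logDeriv_apply, logDeriv_apply, hd.deriv, add_inv_sub_two_mul h0 hε]
  field_simp
  linear_combination deriv ρ x * hε

end LogDeriv

section LargeRoot

lemma ne_of_one_lt_abs {r s : ℝ} (hr : 1 < |r|) (hs : |s| ≤ 1) : r ≠ s := by
  rintro rfl
  exact hr.not_ge hs

lemma add_one_div_sub_one_pos {r : ℝ} (hr : 1 < |r|) : 0 < (r + 1) / (r - 1) := by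
  rcases lt_abs.1 hr with h | h
  · exact div_pos (by linarith) (by linarith)
  · exact div_pos_of_neg_of_neg (by linarith) (by linarith)

lemma sqrt_add_inv_div {r : ℝ} (hr : 1 < |r|) :
    √((r + r⁻¹ + 2) / (r + r⁻¹ - 2)) = (r + 1) / (r - 1) := by
  have h0 : r ≠ 0 := ne_of_one_lt_abs hr (by simp)
  have : r - 1 ≠ 0 := sub_ne_zero.2 (ne_of_one_lt_abs hr (by simp))
  have minus : r + r⁻¹ - 2 = (r - 1) ^ 2 / r := by
    simpa using add_inv_sub_two_mul h0 (one_pow 2)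
  have plus : r + r⁻¹ + 2 = (r + 1) ^ 2 / r := by
    simpa using add_inv_sub_two_mul h0 (neg_one_sq (R := ℝ))
  rw [minus, plus, div_div_div_cancel_right₀ h0, ← div_pow,
    Real.sqrt_sq (add_one_div_sub_one_pos hr).le]

lemma differentiableAt_of_add_inv {ρ : ℝ → ℝ} {x : ℝ} (hρ : ∀ᶠ y in 𝓝 x, 1 < |ρ y|)
    (h : DifferentiableAt ℝ (fun y => ρ y + (ρ y)⁻¹) x) : DifferentiableAt ℝ ρ x := by
  set σ : ℝ → ℝ := fun y => √((ρ y + (ρ y)⁻¹ + 2) / (ρ y + (ρ y)⁻¹ - 2)) with hσ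
  have σ_pos : 0 < σ x := by
    simpa only [hσ, sqrt_add_inv_div hρ.self_of_nhds] using
      add_one_div_sub_one_pos hρ.self_of_nhds
  have ratio_ne : (ρ x + (ρ x)⁻¹ + 2) / (ρ x + (ρ x)⁻¹ - 2) ≠ 0 := (Real.sqrt_pos.1 σ_pos).ne'
  have σ_diff : DifferentiableAt ℝ σ x :=
    ((h.add_const 2).fun_div (h.sub_const 2) (div_ne_zero_iff.1 ratio_ne).2).sqrt ratio_ne
  have σ_sub_one {y : ℝ} (hy : 1 < |ρ y|) : ρ y - 1 ≠ 0 ∧ σ y - 1 = 2 / (ρ y - 1) := by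
    have h1 : ρ y - 1 ≠ 0 := sub_ne_zero.2 (ne_of_one_lt_abs hy (by simp))
    refine ⟨h1, ?_⟩
    simp only [hσ, sqrt_add_inv_div hy]
    field_simp
    ring
  have σ_ne : σ x - 1 ≠ 0 := by
    rw [(σ_sub_one hρ.self_of_nhds).2]
    exact div_ne_zero two_ne_zero (σ_sub_one hρ.self_of_nhds).1
  refine (((σ_diff.sub_const 1).fun_inv σ_ne).const_mul 2).const_add 1
    |>.congr_of_eventuallyEq ?_
  filter_upwards [hρ] with y hy
  rw [(σ_sub_one hy).2, inv_div, mul_div_cancel₀ _ two_ne_zero, add_sub_cancel]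

/-- The derivative of `σ` cancels because `g₁ = σ ^ 2 * g₂`. -/
lemma deriv_eq_of_eq_mul_of_eq_div {H g₁ g₂ σ : ℝ → ℝ} {x : ℝ} (hσ : DifferentiableAt ℝ σ x)
    (hσx : σ x ≠ 0) (h₁ : DifferentiableAt ℝ g₁ x) (h₂ : DifferentiableAt ℝ g₂ x)
    (e₁ : ∀ᶠ y in 𝓝 x, g₁ y = H y * σ y) (e₂ : ∀ᶠ y in 𝓝 x, g₂ y = H y / σ y) :
    deriv H x = (deriv g₁ x / σ x + deriv g₂ x * σ x) / 2 := by
  have average : H =ᶠ[𝓝 x] fun y => (g₁ y / σ y + g₂ y * σ y) / 2 := by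
    filter_upwards [e₁, e₂, hσ.continuousAt.eventually_ne hσx] with y hy₁ hy₂ hy
    rw [hy₁, hy₂]
    field_simp
    ring
  have hd := ((h₁.hasDerivAt.fun_div hσ.hasDerivAt hσx).fun_add
    (h₂.hasDerivAt.fun_mul hσ.hasDerivAt)).div_const 2
  rw [average.deriv_eq, hd.deriv, e₁.self_of_nhds, e₂.self_of_nhds]
  field_simp
  ring

lemma deriv_mul_logDeriv_eq {ρ w : ℝ → ℝ} {f : ℝ → ℝ → ℝ} {x : ℝ}
    (hρ : ∀ᶠ y in 𝓝 x, 1 < |ρ y|) (hf : ∀ ε, f ε =ᶠ[𝓝 x] fun y => ρ y + (ρ y)⁻¹ - 2 * ε)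
    (hd : ∀ᶠ y in 𝓝 x, DifferentiableAt ℝ (f 0) y)
    (hw : ∀ ε, |ε| = 1 → DifferentiableAt ℝ (fun y => w y * logDeriv (f ε) y) x) :
    deriv (fun y => w y * logDeriv ρ y) x =
      (deriv (fun y => w y * logDeriv (f 1) y) x / ((ρ x + 1) / (ρ x - 1)) +
        deriv (fun y => w y * logDeriv (f (-1)) y) x * ((ρ x + 1) / (ρ x - 1))) / 2 := by
  have ρ_diff : ∀ᶠ y in 𝓝 x, DifferentiableAt ℝ ρ y := by
    filter_upwards [hρ.eventually_nhds, (hf 0).eventually_nhds, hd] with y hy hfy hdy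
    refine differentiableAt_of_add_inv hy (hdy.congr_of_eventuallyEq ?_)
    filter_upwards [hfy] with u hu
    rw [hu, mul_zero, sub_zero]
  have transfer {ε : ℝ} (hε : |ε| = 1) : ∀ᶠ y in 𝓝 x,
      w y * logDeriv (f ε) y = w y * logDeriv ρ y * ((ρ y + ε) / (ρ y - ε)) := by
    filter_upwards [hρ, ρ_diff, (hf ε).eventually_nhds] with y hy hdy hfy
    rw [(logDeriv_congr_nhds hfy).eq_of_nhds,
      logDeriv_add_inv_sub hdy (ne_of_one_lt_abs hy (by simp))
      (by rw [← sq_abs, hε, one_pow]) (ne_of_one_lt_abs hy hε.le), mul_assoc]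
  have one_ne : ρ x - 1 ≠ 0 := sub_ne_zero.2 (ne_of_one_lt_abs hρ.self_of_nhds (by simp))
  have σ_diff : DifferentiableAt ℝ (fun y => (ρ y + 1) / (ρ y - 1)) x :=
    (ρ_diff.self_of_nhds.add_const 1).fun_div (ρ_diff.self_of_nhds.sub_const 1) one_ne
  refine deriv_eq_of_eq_mul_of_eq_div σ_diff (add_one_div_sub_one_pos hρ.self_of_nhds).ne'
    (hw 1 abs_one) (hw (-1) (by simp)) (transfer abs_one) ?_
  filter_upwards [transfer (ε := -1) (by simp)] with y hy
  rw [hy, div_eq_mul_inv _ ((ρ y + 1) / _), inv_div, sub_neg_eq_add, ← sub_eq_add_neg]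

end LargeRoot

section DiscRatio

/-- The function `Tr Φ - 2ε` on the real line. -/
noncomputable def discRatio {k : ℕ} (α β : Fin k → ℝ) (ε x : ℝ) : ℝ :=
  (discFactor α β ε).eval x / (x - 1) ^ k

variable {k : ℕ} {α β : Fin k → ℝ} {x : ℝ}

lemma differentiableAt_discRatio (hx1 : x ≠ 1) (ε : ℝ) :
    DifferentiableAt ℝ (discRatio α β ε) x :=
  (discFactor α β ε).differentiableAt.fun_div (by fun_prop) (pow_ne_zero k (sub_ne_zero.2 hx1))

lemma discRatio_eq_add_inv_sub (hx1 : x ≠ 1) {r : ℝ} (hr : r ≠ 0)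
    (h : ((x : ℂ) - 1) ^ k * (r : ℂ) ^ 2 - (aztecT α β (x : ℂ)).trace * (r : ℂ)
      + ((x : ℂ) - 1) ^ k = 0) (ε : ℝ) :
    discRatio α β ε x = r + r⁻¹ - 2 * ε := by
  have eval_eq : (((discFactor α β ε).eval x : ℝ) : ℂ) =
      (aztecT α β (x : ℂ)).trace - 2 * ε * ((x : ℂ) - 1) ^ k := by
    rw [← aeval_discFactor, ← Complex.coe_algebraMap, aeval_algebraMap_apply, coe_aeval_eq_eval]
  have real_eq : (x - 1) ^ k * (r ^ 2 + 1 - 2 * ε * r) = (discFactor α β ε).eval x * r := by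
    apply Complex.ofReal_injective
    push_cast
    rw [eval_eq]
    linear_combination h
  have : x - 1 ≠ 0 := sub_ne_zero.2 hx1
  rw [discRatio]
  field_simp
  linear_combination -real_eq

variable (hk : 1 ≤ k) (hα : ∀ m, 0 < α m) (hβ : ∀ m, 0 < β m) (hx : 0 < x) (hx1 : x ≠ 1)
include hk hα hβ hx hx1

lemma hasDerivAt_mul_logDeriv_discRatio {ε : ℝ} (hε : |ε| = 1) {w : ℝ → ℝ} {w' : ℝ}
    (hw : HasDerivAt w w' x) :
    HasDerivAt (fun y => w y * logDeriv (discRatio α β ε) y)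
      (((discFactor α β ε).roots.map fun r => (w' * (x - r) - w x) / (x - r) ^ 2).sum -
        k * ((w' * (x - 1) - w x) / (x - 1) ^ 2)) x :=
  hasDerivAt_mul_logDeriv_eval_div_pow (splits_discFactor hk hα hβ hε) k 1 hw
    (eval_discFactor_ne_zero hk hα hβ hε hx hx1) hx1

lemma deriv_sub_one_mul_logDeriv_discRatio {ε : ℝ} (hε : |ε| = 1) :
    deriv (fun y => (y - 1) * logDeriv (discRatio α β ε) y) x =
      ((discFactor α β ε).roots.map fun r => (1 - r) / (x - r) ^ 2).sum := by
  have h := hasDerivAt_mul_logDeriv_discRatio hk hα hβ hx hx1 hε ((hasDerivAt_id x).sub_const 1)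
  simpa using h.deriv

lemma deriv_mul_sub_one_mul_logDeriv_discRatio {ε : ℝ} (hε : |ε| = 1) :
    deriv (fun y => y * (y - 1) * logDeriv (discRatio α β ε) y) x =
      ((discFactor α β ε).roots.map fun r => 1 - r * (r - 1) / (x - r) ^ 2).sum - k := by
  have hw : HasDerivAt (fun y : ℝ => y * (y - 1)) (2 * x - 1) x :=
    ((hasDerivAt_id x).fun_mul ((hasDerivAt_id x).sub_const 1)).congr_deriv
      (by simp only [id]; ring)
  have term {r : ℝ} (hr : x ≠ r) : ((2 * x - 1) * (x - r) - x * (x - 1)) / (x - r) ^ 2 =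
      1 - r * (r - 1) / (x - r) ^ 2 := by
    have := sub_ne_zero.2 hr
    field_simp
    ring
  rw [(hasDerivAt_mul_logDeriv_discRatio hk hα hβ hx hx1 hε hw).deriv, term hx1]
  congr 2
  · refine Multiset.map_congr rfl fun r hr => term ?_
    rintro rfl
    exact eval_discFactor_ne_zero hk hα hβ hε hx hx1 (mem_roots'.1 hr).2
  · simp

lemma deriv_sub_one_mul_logDeriv_discRatio_nonneg {ε : ℝ} (hε : |ε| = 1) :
    0 ≤ deriv (fun y => (y - 1) * logDeriv (discRatio α β ε) y) x := by
  rw [deriv_sub_one_mul_logDeriv_discRatio hk hα hβ hx hx1 hε]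
  refine Multiset.sum_nonneg (Multiset.forall_mem_map_iff.2 fun r hr => ?_)
  exact div_nonneg (sub_nonneg.2 (le_one_of_mem_roots_discFactor hk hα hβ hε hr)) (sq_nonneg _)

lemma deriv_sub_one_mul_logDeriv_discRatio_neg_one_pos :
    0 < deriv (fun y => (y - 1) * logDeriv (discRatio α β (-1)) y) x := by
  have hε : |(-1 : ℝ)| = 1 := by simp
  obtain ⟨r, hr, hr1⟩ := exists_mem_roots_discFactor_neg_one_ne_one hk hα hβ
  have r_nonpos : r ≤ 0 :=
    (nonpos_or_eq_one_of_mem_roots_discFactor hk hα hβ hε hr).resolve_right hr1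
  rw [deriv_sub_one_mul_logDeriv_discRatio hk hα hβ hx hx1 hε]
  calc 0 < (1 - r) / (x - r) ^ 2 := div_pos (by linarith) (pow_pos (by linarith) 2)
    _ ≤ _ := Multiset.single_le_sum (Multiset.forall_mem_map_iff.2 fun s hs => div_nonneg
      (sub_nonneg.2 (le_one_of_mem_roots_discFactor hk hα hβ hε hs)) (sq_nonneg _))
      _ (Multiset.mem_map_of_mem _ hr)

lemma deriv_mul_sub_one_mul_logDeriv_discRatio_le {ε : ℝ} (hε : |ε| = 1) :
    deriv (fun y => y * (y - 1) * logDeriv (discRatio α β ε) y) x ≤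
      (discFactor α β ε).natDegree - k := by
  rw [deriv_mul_sub_one_mul_logDeriv_discRatio hk hα hβ hx hx1 hε]
  have bound := Multiset.sum_le_card_nsmul
    ((discFactor α β ε).roots.map fun r => 1 - r * (r - 1) / (x - r) ^ 2) 1
    (Multiset.forall_mem_map_iff.2 fun r hr => ?_)
  · rw [Multiset.card_map, nsmul_one, ← (splits_discFactor hk hα hβ hε).natDegree_eq_card_roots]
      at bound
    linarith
  · have : 0 ≤ r * (r - 1) := by
      rcases nonpos_or_eq_one_of_mem_roots_discFactor hk hα hβ hε hr with h | rfl
      · exact mul_nonneg_of_nonpos_of_nonpos h (by linarith)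
      · simp
    exact sub_le_self 1 (div_nonneg this (sq_nonneg _))

lemma deriv_mul_sub_one_mul_logDeriv_discRatio_nonpos {ε : ℝ} (hε : |ε| = 1) :
    deriv (fun y => y * (y - 1) * logDeriv (discRatio α β ε) y) x ≤ 0 :=
  (deriv_mul_sub_one_mul_logDeriv_discRatio_le hk hα hβ hx hx1 hε).trans
    (sub_nonpos.2 (Nat.cast_le.2 (natDegree_discFactor_le α β ε)))

lemma deriv_mul_sub_one_mul_logDeriv_discRatio_one_neg :
    deriv (fun y => y * (y - 1) * logDeriv (discRatio α β 1) y) x < 0 :=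
  (deriv_mul_sub_one_mul_logDeriv_discRatio_le hk hα hβ hx hx1 abs_one).trans_lt
    (sub_neg.2 (Nat.cast_lt.2 (natDegree_discFactor_one_lt hk)))

end DiscRatio

section LargeEigenvalue

variable {k : ℕ} {α β : Fin k → ℝ} {ρ : ℝ → ℝ} {x : ℝ}

lemma deriv_mul_logDeriv_largeRoot (hk : 1 ≤ k) (hα : ∀ m, 0 < α m) (hβ : ∀ m, 0 < β m)
    (hx : 0 < x) (hx1 : x ≠ 1)
    (heig : ∀ᶠ y : ℝ in 𝓝 x, ((y : ℂ) - 1) ^ k * (ρ y : ℂ) ^ 2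
      - (aztecT α β (y : ℂ)).trace * (ρ y : ℂ) + ((y : ℂ) - 1) ^ k = 0)
    (habs : ∀ᶠ y in 𝓝 x, 1 < |ρ y|) {w : ℝ → ℝ} (hw : DifferentiableAt ℝ w x) :
    deriv (fun y => w y * logDeriv ρ y) x =
      (deriv (fun y => w y * logDeriv (discRatio α β 1) y) x / ((ρ x + 1) / (ρ x - 1)) +
        deriv (fun y => w y * logDeriv (discRatio α β (-1)) y) x *
          ((ρ x + 1) / (ρ x - 1))) / 2 := by
  refine deriv_mul_logDeriv_eq habs (fun ε => ?_)
    ((eventually_ne_nhds hx1).mono fun y hy => differentiableAt_discRatio hy 0)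
    fun ε hε => (hasDerivAt_mul_logDeriv_discRatio hk hα hβ hx hx1 hε
      hw.hasDerivAt).differentiableAt
  filter_upwards [heig, habs, eventually_ne_nhds hx1] with y hy hρy hy1
  exact discRatio_eq_add_inv_sub hy1 (ne_of_one_lt_abs hρy (by simp)) hy ε

theorem stmt18_general (hk : 1 ≤ k) (hα : ∀ m, 0 < α m) (hβ : ∀ m, 0 < β m)
    (heig : ∀ x ∈ Set.Ioo (0 : ℝ) 1 ∪ Set.Ioi (1 : ℝ),
        ((x : ℂ) - 1) ^ k * ((ρ x : ℝ) : ℂ) ^ 2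
          - Matrix.trace (aztecT α β (x : ℂ)) * ((ρ x : ℝ) : ℂ)
          + ((x : ℂ) - 1) ^ k = 0)
    (habs : ∀ x ∈ Set.Ioo (0 : ℝ) 1 ∪ Set.Ioi (1 : ℝ), 1 < |ρ x|)
    (hx : x ∈ Set.Ioo (0 : ℝ) 1 ∪ Set.Ioi (1 : ℝ)) :
    0 < deriv (fun y : ℝ => (y - 1) * deriv ρ y / ρ y) x ∧
      deriv (fun y : ℝ => y * (y - 1) * deriv ρ y / ρ y) x < 0 := by
  have S_nhds : Set.Ioo (0 : ℝ) 1 ∪ Set.Ioi 1 ∈ 𝓝 x := (isOpen_Ioo.union isOpen_Ioi).mem_nhds hx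
  have x_pos : 0 < x := hx.elim (·.1) (one_pos.trans <| Set.mem_Ioi.1 ·)
  have x_ne : x ≠ 1 := hx.elim (·.2.ne) (ne_of_gt ·)
  have σ_pos := add_one_div_sub_one_pos (habs x hx)
  have average {w : ℝ → ℝ} (hw : DifferentiableAt ℝ w x) :=
    deriv_mul_logDeriv_largeRoot hk hα hβ x_pos x_ne (eventually_of_mem S_nhds heig)
      (eventually_of_mem S_nhds habs) hw
  simp only [mul_div_assoc, ← logDeriv_apply]
  rw [average (by fun_prop), average (by fun_prop)]
  constructor
  · have plus := deriv_sub_one_mul_logDeriv_discRatio_nonneg hk hα hβ x_pos x_ne abs_one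
    have minus := deriv_sub_one_mul_logDeriv_discRatio_neg_one_pos hk hα hβ x_pos x_ne
    exact half_pos (add_pos_of_nonneg_of_pos (div_nonneg plus σ_pos.le) (mul_pos minus σ_pos))
  · have plus := deriv_mul_sub_one_mul_logDeriv_discRatio_one_neg hk hα hβ x_pos x_ne
    have minus := deriv_mul_sub_one_mul_logDeriv_discRatio_nonpos hk hα hβ x_pos x_ne (ε := -1)
      (by simp)
    exact div_neg_of_neg_of_pos (add_neg_of_neg_of_nonpos (div_neg_of_neg_of_pos plus σ_pos)
      (mul_nonpos_of_nonpos_of_nonneg minus σ_pos.le)) two_pos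

end LargeEigenvalue

/-- on `S = (0,1) ∪ (1,∞)`, the derivatives of `y ↦ (y−1) ρ′(y)/ρ(y)` and of
`y ↦ y(y−1) ρ′(y)/ρ(y)` are nonzero, where `ρ` is the large eigenvalue of `Φ` on `S`. -/
theorem stmt18 (k : ℕ) (hk : 1 ≤ k) (α β : Fin k → ℝ)
    (hα : ∀ m, 0 < α m) (hβ : ∀ m, 0 < β m)
    (hprod : ∏ m, α m = ∏ m, β m)
    (ρ : ℝ → ℝ)
    (hsmooth : ContDiffOn ℝ 2 ρ (Set.Ioo 0 1 ∪ Set.Ioi 1))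
    (heig : ∀ x ∈ Set.Ioo (0 : ℝ) 1 ∪ Set.Ioi (1 : ℝ),
        ((x : ℂ) - 1) ^ k * ((ρ x : ℝ) : ℂ) ^ 2
          - Matrix.trace (aztecT α β (x : ℂ)) * ((ρ x : ℝ) : ℂ)
          + ((x : ℂ) - 1) ^ k = 0)
    (habs : ∀ x ∈ Set.Ioo (0 : ℝ) 1 ∪ Set.Ioi (1 : ℝ), 1 < |ρ x|) :
    ∀ x ∈ Set.Ioo (0 : ℝ) 1 ∪ Set.Ioi (1 : ℝ),
      deriv (fun y : ℝ => (y - 1) * deriv ρ y / ρ y) x ≠ 0 ∧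
      deriv (fun y : ℝ => y * (y - 1) * deriv ρ y / ρ y) x ≠ 0 :=
  fun _ hx => (stmt18_general hk hα hβ heig habs hx).imp ne_of_gt ne_of_lt
end
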